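/- (Jörgens–Calabi–Pogorelov theorem) Let n ≥ 2 and let u : ℝⁿ → ℝ be a smooth convex function satisfying det D²u(x) = 1 for every x ∈ ℝⁿ. Then u is a quadratic polynomial. -/

import Mathlib

open Real

/-- Second partial derivative matrix (Hessian) of `u` at `x`. -/
noncomputable def hessianMatrix {n : ℕ} (u : EuclideanSpace ℝ (Fin n) → ℝ)
    (x : EuclideanSpace ℝ (Fin n)) : Matrix (Fin n) (Fin n) ℝ :=
  Matrix.of fun i j =>
    fderiv ℝ (fun y => fderiv ℝ u y (EuclideanSpace.single j 1)) x (EuclideanSpace.single i 1)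

/-- `u` is a quadratic polynomial. -/
def IsQuadraticPoly {n : ℕ} (u : EuclideanSpace ℝ (Fin n) → ℝ) : Prop :=
  ∃ (A : Matrix (Fin n) (Fin n) ℝ) (b : Fin n → ℝ) (c : ℝ), A.IsSymm ∧
    ∀ x, u x = (1/2) * (∑ i, ∑ j, A i j * x i * x j) + (∑ i, b i * x i) + c

/-- Second order jet at `0` of a real function. -/
def J2 (f : ℝ → ℝ) (a b c : ℝ) : Prop :=
  f 0 = a ∧ ∃ f1 : ℝ → ℝ, (∀ t, HasDerivAt f (f1 t) t) ∧ f1 0 = b ∧ HasDerivAt f1 c 0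

namespace J2

theorem congr_vals {f : ℝ → ℝ} {a b c a' b' c' : ℝ} (h : J2 f a b c) (ha : a = a') (hb : b = b')
    (hc : c = c') : J2 f a' b' c' := by subst ha hb hc; exact h

theorem const (k : ℝ) : J2 (fun _ => k) k 0 0 :=
  ⟨rfl, fun _ => 0, fun t => hasDerivAt_const t k, rfl, hasDerivAt_const 0 0⟩

theorem id : J2 (fun t => t) 0 1 0 :=
  ⟨rfl, fun _ => 1, fun t => hasDerivAt_id t, rfl, hasDerivAt_const 0 1⟩

theorem add {f g : ℝ → ℝ} {a b c a' b' c' : ℝ} (h : J2 f a b c) (h' : J2 g a' b' c') :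
    J2 (fun t => f t + g t) (a + a') (b + b') (c + c') := by
  obtain ⟨h0, f1, h1, h2, h3⟩ := h
  obtain ⟨k0, g1, k1, k2, k3⟩ := h'
  exact ⟨by simp [h0, k0], fun t => f1 t + g1 t, fun t => (h1 t).add (k1 t), by simp [h2, k2],
    h3.add k3⟩

theorem sub {f g : ℝ → ℝ} {a b c a' b' c' : ℝ} (h : J2 f a b c) (h' : J2 g a' b' c') :
    J2 (fun t => f t - g t) (a - a') (b - b') (c - c') := by
  obtain ⟨h0, f1, h1, h2, h3⟩ := h
  obtain ⟨k0, g1, k1, k2, k3⟩ := h'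
  exact ⟨by simp [h0, k0], fun t => f1 t - g1 t, fun t => (h1 t).sub (k1 t), by simp [h2, k2],
    h3.sub k3⟩

theorem mul {f g : ℝ → ℝ} {a b c a' b' c' : ℝ} (h : J2 f a b c) (h' : J2 g a' b' c') :
    J2 (fun t => f t * g t) (a * a') (b * a' + a * b') (c * a' + 2 * (b * b') + a * c') := by
  obtain ⟨h0, f1, h1, h2, h3⟩ := h
  obtain ⟨k0, g1, k1, k2, k3⟩ := h'
  refine ⟨by simp [h0, k0], fun t => f1 t * g t + f t * g1 t, fun t => (h1 t).mul (k1 t),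
    by simp [h2, k2, h0, k0], ?_⟩
  have := (h3.mul (k1 0)).add ((h1 0).mul k3)
  refine this.congr_deriv ?_
  rw [h0, k0, h2, k2]; ring

theorem pow {f : ℝ → ℝ} {a b c : ℝ} (h : J2 f a b c) (n : ℕ) :
    J2 (fun t => f t ^ (n + 2)) (a ^ (n + 2)) ((n + 2) * a ^ (n + 1) * b)
      ((n + 2) * (n + 1) * a ^ n * b ^ 2 + (n + 2) * a ^ (n + 1) * c) := by
  induction n with
  | zero =>
    have := h.mul h
    simp only [← pow_two] at this
    exact this.congr_vals rfl (by push_cast; ring) (by push_cast; ring)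
  | succ n ih =>
    have := ih.mul h
    simp only [← pow_succ] at this
    exact this.congr_vals rfl (by push_cast; ring) (by push_cast; ring)

theorem of_max {f : ℝ → ℝ} {a b c : ℝ} (h : J2 f a b c) (hm : IsLocalMax f 0) :
    b = 0 ∧ c ≤ 0 := by
  obtain ⟨h0, f1, h1, h2, h3⟩ := h
  have hd : deriv f = f1 := funext fun t => (h1 t).deriv
  have hb : b = 0 := by rw [← h2]; exact hm.hasDerivAt_eq_zero (h1 0)
  refine ⟨hb, ?_⟩
  by_contra hc
  push Not at hc
  have hmin : IsLocalMin f 0 := by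
    apply isLocalMin_of_deriv_deriv_pos
    · rw [hd, h3.deriv]; exact hc
    · rw [hd, h2, hb]
    · exact (h1 0).continuousAt
  have heq : f =ᶠ[nhds 0] fun _ => f 0 := by
    filter_upwards [hm, hmin] with t ht ht'
    exact le_antisymm ht ht'
  have h1eq : f1 =ᶠ[nhds 0] fun _ => 0 := by
    have := heq.deriv
    rw [hd] at this
    simpa using this
  have : HasDerivAt (fun _ : ℝ => (0:ℝ)) c 0 := h3.congr_of_eventuallyEq h1eq.symm
  have := this.unique (hasDerivAt_const 0 0)
  linarith

end J2

/-- Directional derivative. -/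
noncomputable def dd {n : ℕ} (v : EuclideanSpace ℝ (Fin n)) (f : EuclideanSpace ℝ (Fin n) → ℝ) :
    EuclideanSpace ℝ (Fin n) → ℝ := fun x => fderiv ℝ f x v

section Calculus
variable {n : ℕ} {f : EuclideanSpace ℝ (Fin n) → ℝ}

theorem dd_smooth (hf : ContDiff ℝ (⊤ : ℕ∞) f) (v : EuclideanSpace ℝ (Fin n)) :
    ContDiff ℝ (⊤ : ℕ∞) (dd v f) := by
  unfold dd
  exact (hf.fderiv_right (m := (⊤ : ℕ∞)) (by simp)).clm_apply contDiff_const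

theorem smooth_diff (hf : ContDiff ℝ (⊤ : ℕ∞) f) : Differentiable ℝ f :=
  hf.differentiable (by simp)

theorem dd_comm (hf : ContDiff ℝ (⊤ : ℕ∞) f) (v w : EuclideanSpace ℝ (Fin n)) :
    dd v (dd w f) = dd w (dd v f) := by
  have key : ∀ a b x, dd a (dd b f) x = fderiv ℝ (fderiv ℝ f) x a b := by
    intro a b x
    have hd : DifferentiableAt ℝ (fderiv ℝ f) x :=
      ((hf.fderiv_right (m := (⊤ : ℕ∞)) (by simp)).differentiable (by simp)) x
    unfold dd
    rw [fderiv_clm_apply hd (differentiableAt_const b)]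
    simp
  funext x
  rw [key, key]
  exact (hf.contDiffAt.isSymmSndFDerivAt (by simp; exact WithTop.coe_le_coe.2 (le_top (a := (2 : ℕ∞))))) v w

theorem dd_add (v w : EuclideanSpace ℝ (Fin n)) : dd (v + w) f = dd v f + dd w f := by
  funext x; simp [dd]

theorem dd_smul (c : ℝ) (v : EuclideanSpace ℝ (Fin n)) : dd (c • v) f = c • dd v f := by
  funext x; simp [dd]

theorem dd_fadd {g : EuclideanSpace ℝ (Fin n) → ℝ} (hf : ContDiff ℝ (⊤ : ℕ∞) f)
    (hg : ContDiff ℝ (⊤ : ℕ∞) g) (v : EuclideanSpace ℝ (Fin n)) :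
    dd v (f + g) = dd v f + dd v g := by
  funext x
  simp only [dd, Pi.add_apply]
  rw [fderiv_add (smooth_diff hf x) (smooth_diff hg x)]; simp

theorem dd_fsmul (c : ℝ) (hf : ContDiff ℝ (⊤ : ℕ∞) f) (v : EuclideanSpace ℝ (Fin n)) :
    dd v (c • f) = c • dd v f := by
  funext x
  simp only [dd, Pi.smul_apply]
  rw [fderiv_const_smul (smooth_diff hf x)]; simp

theorem dd_sum {ι : Type*} (s : Finset ι) (c : ι → ℝ) (v : ι → EuclideanSpace ℝ (Fin n))
    (x : EuclideanSpace ℝ (Fin n)) :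
    dd (∑ i ∈ s, c i • v i) f x = ∑ i ∈ s, c i * dd (v i) f x := by
  simp [dd]

theorem hasDerivAt_line (hf : ContDiff ℝ (⊤ : ℕ∞) f) (x d : EuclideanSpace ℝ (Fin n)) (t : ℝ) :
    HasDerivAt (fun t : ℝ => f (x + t • d)) (dd d f (x + t • d)) t := by
  have h1 : HasDerivAt (fun t : ℝ => x + t • d) d t := by
    simpa using ((hasDerivAt_id t).smul_const d).const_add x
  exact ((smooth_diff hf (x + t • d)).hasFDerivAt).comp_hasDerivAt t h1

theorem J2_line (hf : ContDiff ℝ (⊤ : ℕ∞) f) (x d : EuclideanSpace ℝ (Fin n)) :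
    J2 (fun t : ℝ => f (x + t • d)) (f x) (dd d f x) (dd d (dd d f) x) := by
  refine ⟨by simp, fun t => dd d f (x + t • d), hasDerivAt_line hf x d, by simp, ?_⟩
  simpa using hasDerivAt_line (dd_smooth hf d) x d 0

/-- first derivative along moving direction -/
theorem J2_one (hf : ContDiff ℝ (⊤ : ℕ∞) f) (x d ξ b : EuclideanSpace ℝ (Fin n)) :
    J2 (fun t : ℝ => dd (ξ + t • b) f (x + t • d)) (dd ξ f x) (dd d (dd ξ f) x + dd b f x)
      (dd d (dd d (dd ξ f)) x + 2 * dd d (dd b f) x) := by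
  have h := (J2_line (dd_smooth hf ξ) x d).add (J2.id.mul (J2_line (dd_smooth hf b) x d))
  have e : (fun t : ℝ => dd (ξ + t • b) f (x + t • d)) =
      fun t => dd ξ f (x + t • d) + t * dd b f (x + t • d) := by
    funext t; simp [dd_add, dd_smul]
  rw [e]
  exact h.congr_vals (by ring) (by ring) (by ring)

theorem two_expand (hf : ContDiff ℝ (⊤ : ℕ∞) f) (ξ b : EuclideanSpace ℝ (Fin n)) (t : ℝ) :
    dd (ξ + t • b) (dd (ξ + t • b) f) =
      dd ξ (dd ξ f) + (2 * t) • dd ξ (dd b f) + (t ^ 2) • dd b (dd b f) := by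
  have hξ := dd_smooth hf ξ
  have hb := dd_smooth hf b
  have hs : ContDiff ℝ (⊤ : ℕ∞) (t • dd b f) := hb.const_smul t
  rw [dd_add (f := f), dd_smul, dd_add, dd_smul, dd_fadd hξ hs, dd_fadd hξ hs, dd_fsmul t hb,
    dd_fsmul t hb, dd_comm hf b ξ]
  funext x
  simp only [Pi.add_apply, Pi.smul_apply, smul_eq_mul]
  ring

theorem J2_two (hf : ContDiff ℝ (⊤ : ℕ∞) f) (x d ξ b : EuclideanSpace ℝ (Fin n)) :
    J2 (fun t : ℝ => dd (ξ + t • b) (dd (ξ + t • b) f) (x + t • d)) (dd ξ (dd ξ f) x)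
      (dd d (dd ξ (dd ξ f)) x + 2 * dd ξ (dd b f) x)
      (dd d (dd d (dd ξ (dd ξ f))) x + 4 * dd d (dd ξ (dd b f)) x + 2 * dd b (dd b f) x) := by
  have hξ := dd_smooth hf ξ
  have hb := dd_smooth hf b
  have h := ((J2_line (dd_smooth hξ ξ) x d).add
    (((J2.const 2).mul J2.id).mul (J2_line (dd_smooth hb ξ) x d))).add
    ((J2.id.mul J2.id).mul (J2_line (dd_smooth hb b) x d))
  have e : (fun t : ℝ => dd (ξ + t • b) (dd (ξ + t • b) f) (x + t • d)) =
      fun t => dd ξ (dd ξ f) (x + t • d) + 2 * t * dd ξ (dd b f) (x + t • d)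
        + t * t * dd b (dd b f) (x + t • d) := by
    funext t; rw [two_expand hf]; simp [pow_two]
  rw [e]
  exact h.congr_vals (by ring) (by ring) (by ring)

theorem three_expand (hf : ContDiff ℝ (⊤ : ℕ∞) f) (ξ b : EuclideanSpace ℝ (Fin n)) (t : ℝ) :
    dd (ξ + t • b) (dd (ξ + t • b) (dd (ξ + t • b) f)) =
      dd ξ (dd ξ (dd ξ f)) + (3 * t) • dd ξ (dd ξ (dd b f)) + (3 * t ^ 2) • dd ξ (dd b (dd b f))
        + (t ^ 3) • dd b (dd b (dd b f)) := by
  have hξ := dd_smooth hf ξ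
  have hb := dd_smooth hf b
  have h1 := dd_smooth hξ ξ
  have h2 := dd_smooth hb ξ
  have h3 := dd_smooth hb b
  have h2s : ContDiff ℝ (⊤ : ℕ∞) ((2 * t) • dd ξ (dd b f)) := h2.const_smul (2 * t)
  have h3s : ContDiff ℝ (⊤ : ℕ∞) ((t ^ 2) • dd b (dd b f)) := h3.const_smul (t ^ 2)
  rw [two_expand hf, dd_add, dd_smul]
  have h12 : ContDiff ℝ (⊤ : ℕ∞) (dd ξ (dd ξ f) + (2 * t) • dd ξ (dd b f)) := h1.add h2s
  simp only [dd_fadd h12 h3s, dd_fadd h1 h2s, dd_fsmul _ h2, dd_fsmul _ h3]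
  have e1 : dd b (dd ξ (dd ξ f)) = dd ξ (dd ξ (dd b f)) := by
    rw [dd_comm hξ b ξ, dd_comm hf b ξ]
  have e2 : dd b (dd ξ (dd b f)) = dd ξ (dd b (dd b f)) := by
    rw [dd_comm hb b ξ]
  rw [e1, e2]
  funext x
  simp only [Pi.add_apply, Pi.smul_apply, smul_eq_mul]
  ring

theorem J2_three (hf : ContDiff ℝ (⊤ : ℕ∞) f) (x d ξ b : EuclideanSpace ℝ (Fin n)) :
    J2 (fun t : ℝ => dd (ξ + t • b) (dd (ξ + t • b) (dd (ξ + t • b) f)) (x + t • d))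
      (dd ξ (dd ξ (dd ξ f)) x)
      (dd d (dd ξ (dd ξ (dd ξ f))) x + 3 * dd ξ (dd ξ (dd b f)) x)
      (dd d (dd d (dd ξ (dd ξ (dd ξ f)))) x + 6 * dd d (dd ξ (dd ξ (dd b f))) x
        + 6 * dd ξ (dd b (dd b f)) x) := by
  have hξ := dd_smooth hf ξ
  have hb := dd_smooth hf b
  have h1 := dd_smooth (dd_smooth hξ ξ) ξ
  have h2 := dd_smooth (dd_smooth hb ξ) ξ
  have h3 := dd_smooth (dd_smooth hb b) ξ
  have h4 := dd_smooth (dd_smooth hb b) b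
  have h := (((J2_line h1 x d).add
    (((J2.const 3).mul J2.id).mul (J2_line h2 x d))).add
    (((J2.const 3).mul (J2.id.mul J2.id)).mul (J2_line h3 x d))).add
    ((J2.id.mul (J2.id.mul J2.id)).mul (J2_line h4 x d))
  have e : (fun t : ℝ => dd (ξ + t • b) (dd (ξ + t • b) (dd (ξ + t • b) f)) (x + t • d)) =
      fun t => dd ξ (dd ξ (dd ξ f)) (x + t • d) + 3 * t * dd ξ (dd ξ (dd b f)) (x + t • d)
        + 3 * (t * t) * dd ξ (dd b (dd b f)) (x + t • d)
        + t * (t * t) * dd b (dd b (dd b f)) (x + t • d) := by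
    funext t; rw [three_expand hf]; simp only [Pi.add_apply, Pi.smul_apply, smul_eq_mul]; ring
  rw [e]
  exact h.congr_vals (by ring) (by ring) (by ring)

end Calculus
theorem hasDerivAt_det_path {n : ℕ} (G G1 : ℝ → Matrix (Fin n) (Fin n) ℝ) (t : ℝ)
    (h1 : ∀ i j, HasDerivAt (fun t => G t i j) (G1 t i j) t) :
    HasDerivAt (fun t => (G t).det) (((G t).adjugate * G1 t).trace) t := by
  have e : ((G t).adjugate * G1 t).trace = ∑ σ : Equiv.Perm (Fin n),
      ((Equiv.Perm.sign σ : ℤ) : ℝ) *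
        ∑ i, (∏ j ∈ Finset.univ.erase i, G t (σ j) j) • G1 t (σ i) i := by
    have : ∀ i, ((G t).adjugate * G1 t) i i = ((G t).updateCol i (fun k => G1 t k i)).det := by
      intro i
      rw [← Matrix.cramer_apply, Matrix.cramer_eq_adjugate_mulVec]
      rfl
    simp only [Matrix.trace, Matrix.diag, this]
    simp only [Matrix.det_apply']
    rw [Finset.sum_comm]
    refine Finset.sum_congr rfl fun σ _ => ?_
    rw [Finset.mul_sum]
    refine Finset.sum_congr rfl fun i _ => ?_
    congr 1
    rw [← Finset.prod_erase_mul _ _ (Finset.mem_univ i)]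
    simp only [Matrix.updateCol_self, smul_eq_mul]
    congr 1
    refine Finset.prod_congr rfl fun j hj => ?_
    rw [Matrix.updateCol_ne (Finset.ne_of_mem_erase hj)]
  rw [e]
  simp only [Matrix.det_apply']
  refine HasDerivAt.fun_sum fun σ _ => ?_
  exact (HasDerivAt.fun_finsetProd fun i _ => h1 (σ i) i).const_mul _

theorem hasDerivAt_trace {n : ℕ} {G : ℝ → Matrix (Fin n) (Fin n) ℝ} {G1 : Matrix (Fin n) (Fin n) ℝ}
    {t : ℝ} (h1 : ∀ i j, HasDerivAt (fun t => G t i j) (G1 i j) t) :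
    HasDerivAt (fun t => (G t).trace) G1.trace t := by
  unfold Matrix.trace
  exact HasDerivAt.fun_sum fun i _ => h1 i i

theorem hasDerivAt_matmul {n : ℕ} {G H : ℝ → Matrix (Fin n) (Fin n) ℝ}
    {G1 H1 : Matrix (Fin n) (Fin n) ℝ}
    {t : ℝ} (h1 : ∀ i j, HasDerivAt (fun t => G t i j) (G1 i j) t)
    (h2 : ∀ i j, HasDerivAt (fun t => H t i j) (H1 i j) t) :
    ∀ i j, HasDerivAt (fun t => (G t * H t) i j) ((G1 * H t + G t * H1) i j) t := by
  intro i j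
  simp only [Matrix.mul_apply, Matrix.add_apply, ← Finset.sum_add_distrib]
  exact HasDerivAt.fun_sum fun k _ => (h1 i k).mul (h2 k j)

theorem hasDerivAt_matinv {n : ℕ} (G G1 : ℝ → Matrix (Fin n) (Fin n) ℝ) (t : ℝ)
    (h1 : ∀ t i j, HasDerivAt (fun t => G t i j) (G1 t i j) t)
    (hdet : ∀ t, (G t).det = 1) :
    ∀ i j, HasDerivAt (fun t => (G t).adjugate i j)
      ((-((G t).adjugate * G1 t * (G t).adjugate)) i j) t := by
  have hd : ∀ i j, ∃ d, HasDerivAt (fun t => (G t).adjugate i j) d t := by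
    intro i j
    simp only [Matrix.adjugate_apply]
    refine ⟨_, hasDerivAt_det_path (fun t => (G t).updateRow j (Pi.single i 1))
      (fun t => (G1 t).updateRow j 0) t ?_⟩
    intro k l
    by_cases hk : k = j
    · subst hk; simpa using hasDerivAt_const t _
    · simpa [Matrix.updateRow_ne hk] using h1 t k l
  choose N1 hN using hd
  have hm := hasDerivAt_matmul (G := G) (H := fun t => (G t).adjugate) (G1 := G1 t)
    (H1 := Matrix.of N1) (h1 t) hN
  have hz : G1 t * (G t).adjugate + G t * Matrix.of N1 = 0 := by
    ext i j
    have h := hm i j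
    simp only [Matrix.mul_adjugate, hdet, one_smul] at h
    exact h.unique (hasDerivAt_const t _)
  have key : Matrix.of N1 = -((G t).adjugate * G1 t * (G t).adjugate) := by
    have : (G t).adjugate * (G1 t * (G t).adjugate + G t * Matrix.of N1) = 0 := by
      rw [hz, Matrix.mul_zero]
    rw [Matrix.mul_add, ← Matrix.mul_assoc, ← Matrix.mul_assoc, Matrix.adjugate_mul, hdet, one_smul,
      Matrix.one_mul] at this
    exact eq_neg_of_add_eq_zero_right this
  intro i j
  rw [← key]
  exact hN i j

theorem det_identities {n : ℕ} (G G1 G2 G3 : ℝ → Matrix (Fin n) (Fin n) ℝ)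
    (h1 : ∀ t i j, HasDerivAt (fun t => G t i j) (G1 t i j) t)
    (h2 : ∀ t i j, HasDerivAt (fun t => G1 t i j) (G2 t i j) t)
    (h3 : ∀ t i j, HasDerivAt (fun t => G2 t i j) (G3 t i j) t)
    (hdet : ∀ t, (G t).det = 1) (h0 : G 0 = 1) :
    (G1 0).trace = 0 ∧ (G2 0).trace = (G1 0 * G1 0).trace ∧
      (G3 0).trace = 3 * (G1 0 * G2 0).trace - 2 * (G1 0 * G1 0 * G1 0).trace := by
  set N : ℝ → Matrix (Fin n) (Fin n) ℝ := fun t => (G t).adjugate with hN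
  have hN0 : N 0 = 1 := by simp [hN, h0]
  have dN : ∀ t i j, HasDerivAt (fun t => N t i j) ((-(N t * G1 t * N t)) i j) t :=
    fun t => hasDerivAt_matinv G G1 t h1 hdet
  have T1 : ∀ t, (N t * G1 t).trace = 0 := by
    intro t
    have := hasDerivAt_det_path G G1 t (h1 t)
    simp only [hdet] at this
    exact this.unique (hasDerivAt_const t _)
  have T2 : ∀ t, (-(N t * G1 t * N t) * G1 t + N t * G2 t).trace = 0 := by
    intro t
    have := hasDerivAt_trace (hasDerivAt_matmul (dN t) (h2 t))
    simp only [T1] at this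
    exact this.unique (hasDerivAt_const t _)
  have T2' : ∀ t, (N t * G2 t).trace - ((N t * G1 t) * (N t * G1 t)).trace = 0 := by
    intro t
    rw [← T2 t, Matrix.trace_add, Matrix.neg_mul, Matrix.trace_neg]
    simp only [Matrix.mul_assoc]; ring
  have T3 := (hasDerivAt_trace (hasDerivAt_matmul (dN 0) (h3 0))).sub
    (hasDerivAt_trace (hasDerivAt_matmul (hasDerivAt_matmul (dN 0) (h2 0))
      (hasDerivAt_matmul (dN 0) (h2 0))))
  have T3' := T3.unique (by
    have : ((fun t => (N t * G2 t).trace) - fun t => ((N t * G1 t) * (N t * G1 t)).trace) =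
      fun _ => (0:ℝ) := by funext t; exact T2' t
    rw [this]; exact hasDerivAt_const 0 0)
  have t1 := T1 0
  have t2 := T2' 0
  simp only [hN0, Matrix.one_mul, Matrix.mul_one] at t1 t2 T3'
  refine ⟨t1, by linarith, ?_⟩
  simp only [Matrix.trace_add, Matrix.trace_neg, Matrix.neg_mul, Matrix.mul_neg, Matrix.add_mul,
    Matrix.mul_add, Matrix.mul_assoc] at T3' ⊢
  rw [Matrix.trace_mul_comm (G2 0) (G1 0)] at T3'
  linarith
section Basis
variable {n : ℕ} {u : EuclideanSpace ℝ (Fin n) → ℝ}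

theorem dd_coord (f : EuclideanSpace ℝ (Fin n) → ℝ) (v x : EuclideanSpace ℝ (Fin n)) :
    dd v f x = ∑ i, v i * dd (EuclideanSpace.single i (1:ℝ)) f x := by
  have : v = ∑ i, v i • EuclideanSpace.single i (1:ℝ) := by
    ext k
    simp [Finset.sum_apply, Pi.single_apply]
  conv_lhs => rw [this]
  rw [dd_sum]

theorem dd2_coord (hu : ContDiff ℝ (⊤ : ℕ∞) u) (v w x : EuclideanSpace ℝ (Fin n)) :
    dd v (dd w u) x = ∑ i, ∑ j, v i * hessianMatrix u x i j * w j := by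
  rw [dd_coord]
  refine Finset.sum_congr rfl fun i _ => ?_
  rw [dd_comm hu, dd_coord, Finset.mul_sum]
  refine Finset.sum_congr rfl fun j _ => ?_
  rw [dd_comm hu]
  change _ = v i * dd (EuclideanSpace.single i (1:ℝ)) (dd (EuclideanSpace.single j (1:ℝ)) u) x * w j
  ring

theorem dd2_nonneg (hu : ContDiff ℝ (⊤ : ℕ∞) u) (hconv : ConvexOn ℝ Set.univ u)
    (v x : EuclideanSpace ℝ (Fin n)) : 0 ≤ dd v (dd v u) x := by
  have h := ((J2.const (2 * u x)).sub (J2_line hu x v)).sub (J2_line hu x (-v))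
  have hm := h.of_max (by
    refine Filter.Eventually.of_forall fun t => ?_
    have := hconv.2 (Set.mem_univ (x + t • v)) (Set.mem_univ (x + t • -v))
      (by norm_num : (0:ℝ) ≤ 1/2) (by norm_num : (0:ℝ) ≤ 1/2) (by norm_num)
    have e : (1/2 : ℝ) • (x + t • v) + (1/2 : ℝ) • (x + t • -v) = x := by
      module
    rw [e] at this
    simp only [smul_eq_mul] at this
    simp only [zero_smul, add_zero]
    linarith)
  have e : dd (-v) (dd (-v) u) x = dd v (dd v u) x := by
    have e1 : -v = (-1 : ℝ) • v := by simp
    rw [e1, dd_smul, dd_smul, dd_fsmul _ (dd_smooth hu v)]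
    simp
  rw [e] at hm
  linarith [hm.2]

theorem hess_symm (hu : ContDiff ℝ (⊤ : ℕ∞) u) (x : EuclideanSpace ℝ (Fin n)) (i j : Fin n) :
    hessianMatrix u x i j = hessianMatrix u x j i := by
  change dd (EuclideanSpace.single i (1:ℝ)) (dd (EuclideanSpace.single j (1:ℝ)) u) x =
    dd (EuclideanSpace.single j (1:ℝ)) (dd (EuclideanSpace.single i (1:ℝ)) u) x
  rw [dd_comm hu]

theorem quad_eq (H : Matrix (Fin n) (Fin n) ℝ) (w : Fin n → ℝ) :
    dotProduct (star w) (H.mulVec w) = ∑ i, ∑ j, w i * H i j * w j := by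
  simp [dotProduct, Matrix.mulVec, Finset.mul_sum, mul_assoc]

theorem hess_posDef (hu : ContDiff ℝ (⊤ : ℕ∞) u) (hconv : ConvexOn ℝ Set.univ u)
    (hMA : ∀ x, (hessianMatrix u x).det = 1) (x : EuclideanSpace ℝ (Fin n)) :
    (hessianMatrix u x).PosDef := by
  have hp : (hessianMatrix u x).PosSemidef := by
    apply Matrix.PosSemidef.of_dotProduct_mulVec_nonneg
    · ext i j
      simp [Matrix.conjTranspose_apply, hess_symm hu x i j]
    · intro w
      have := dd2_nonneg hu hconv (WithLp.toLp 2 w) x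
      rw [dd2_coord hu] at this
      rw [quad_eq]; exact this
  rw [hp.posDef_iff_det_ne_zero, hMA]
  exact one_ne_zero

theorem dd2_pos (hu : ContDiff ℝ (⊤ : ℕ∞) u) (hconv : ConvexOn ℝ Set.univ u)
    (hMA : ∀ x, (hessianMatrix u x).det = 1) (x : EuclideanSpace ℝ (Fin n))
    {v : EuclideanSpace ℝ (Fin n)} (hv : v ≠ 0) : 0 < dd v (dd v u) x := by
  have := (hess_posDef hu hconv hMA x).dotProduct_mulVec_pos (x := WithLp.ofLp v)
    (by intro h; apply hv; ext i; simp [h])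
  rw [dd2_coord hu]
  rw [quad_eq] at this; exact this

open scoped MatrixOrder in
theorem exists_basis (hu : ContDiff ℝ (⊤ : ℕ∞) u) (hconv : ConvexOn ℝ Set.univ u)
    (hMA : ∀ x, (hessianMatrix u x).det = 1) (x₀ : EuclideanSpace ℝ (Fin n)) :
    ∃ e : Fin n → EuclideanSpace ℝ (Fin n),
      (∀ i j, dd (e i) (dd (e j) u) x₀ = if i = j then 1 else 0) ∧
      (∀ x, (Matrix.of fun i j => dd (e i) (dd (e j) u) x).det = 1) ∧
      (∀ w, w = ∑ j, (dd w (dd (e j) u) x₀) • e j) := by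
  have hP := hess_posDef hu hconv hMA x₀
  obtain ⟨C, hC⟩ := CStarAlgebra.nonneg_iff_eq_star_mul_self.1 hP.posSemidef.nonneg
  set H := hessianMatrix u x₀ with hH
  have hCT : H = C.transpose * C := by
    rw [hC]; rfl
  have hCdet : IsUnit C.det := by
    have : H.det = 1 := hMA x₀
    rw [hCT, Matrix.det_mul] at this
    exact IsUnit.of_mul_eq_one_right _ this
  set B := C⁻¹ with hB
  have hCB : C * B = 1 := Matrix.mul_nonsing_inv C hCdet
  have hBHB : B.transpose * H * B = 1 := by
    rw [hCT, Matrix.mul_assoc, Matrix.mul_assoc, hCB, Matrix.mul_one, ← Matrix.transpose_mul, hCB,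
      Matrix.transpose_one]
  have hBBH : B * (B.transpose * H) = 1 := mul_eq_one_comm.1 hBHB
  let e : Fin n → EuclideanSpace ℝ (Fin n) := fun i => WithLp.toLp 2 (fun k => B k i)
  have hG : ∀ x, (Matrix.of fun i j => dd (e i) (dd (e j) u) x) =
      B.transpose * hessianMatrix u x * B := by
    intro x
    ext i j
    simp only [Matrix.of_apply, dd2_coord hu, Matrix.mul_apply, Matrix.transpose_apply, e,
      Finset.sum_mul]
    rw [Finset.sum_comm]
  refine ⟨e, ?_, ?_, ?_⟩
  · intro i j
    have := congrFun (congrFun (hG x₀) i) j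
    rw [← hH, hBHB, Matrix.one_apply] at this
    exact this
  · intro x
    rw [hG x, Matrix.det_mul, Matrix.det_mul, hMA x]
    have := congrArg Matrix.det hBHB
    rw [Matrix.det_mul, Matrix.det_mul, hMA x₀, Matrix.det_one] at this
    exact this
  · intro w
    have hw : (B * (B.transpose * H)).mulVec (WithLp.ofLp w) = WithLp.ofLp w := by
      rw [hBBH, Matrix.one_mulVec]
    ext k
    have hk := congrFun hw k
    rw [← Matrix.mulVec_mulVec] at hk
    rw [← hk]
    simp only [Matrix.mulVec, dotProduct, e, WithLp.ofLp_sum, Finset.sum_apply, PiLp.smul_apply,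
      smul_eq_mul]
    refine Finset.sum_congr rfl fun j _ => ?_
    rw [mul_comm]
    congr 1
    rw [dd_comm hu, dd2_coord hu, Finset.sum_comm]
    refine Finset.sum_congr rfl fun l _ => ?_
    simp only [Matrix.mul_apply, Finset.sum_mul, Matrix.transpose_apply, hH]

theorem trace_ids (hu : ContDiff ℝ (⊤ : ℕ∞) u) (x₀ : EuclideanSpace ℝ (Fin n))
    (e : Fin n → EuclideanSpace ℝ (Fin n))
    (he : ∀ i j, dd (e i) (dd (e j) u) x₀ = if i = j then 1 else 0)
    (hdet : ∀ x, (Matrix.of fun i j => dd (e i) (dd (e j) u) x).det = 1)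
    (v : EuclideanSpace ℝ (Fin n)) :
    (∑ i, dd v (dd (e i) (dd (e i) u)) x₀ = 0) ∧
    (∑ i, dd v (dd v (dd (e i) (dd (e i) u))) x₀ =
      ∑ i, ∑ j, dd v (dd (e i) (dd (e j) u)) x₀ * dd v (dd (e i) (dd (e j) u)) x₀) ∧
    (∑ i, dd v (dd v (dd v (dd (e i) (dd (e i) u)))) x₀ =
      3 * (∑ i, ∑ j, dd v (dd (e i) (dd (e j) u)) x₀ * dd v (dd v (dd (e i) (dd (e j) u))) x₀)
      - 2 * ∑ i, ∑ j, ∑ k, dd v (dd (e i) (dd (e j) u)) x₀ * dd v (dd (e j) (dd (e k) u)) x₀ *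
        dd v (dd (e k) (dd (e i) u)) x₀) := by
  have s0 : ∀ i j, ContDiff ℝ (⊤ : ℕ∞) (dd (e i) (dd (e j) u)) := fun i j =>
    dd_smooth (dd_smooth hu _) _
  obtain ⟨d1, d2, d3⟩ := det_identities
    (fun t => Matrix.of fun i j => dd (e i) (dd (e j) u) (x₀ + t • v))
    (fun t => Matrix.of fun i j => dd v (dd (e i) (dd (e j) u)) (x₀ + t • v))
    (fun t => Matrix.of fun i j => dd v (dd v (dd (e i) (dd (e j) u))) (x₀ + t • v))
    (fun t => Matrix.of fun i j => dd v (dd v (dd v (dd (e i) (dd (e j) u)))) (x₀ + t • v))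
    (fun t i j => hasDerivAt_line (s0 i j) x₀ v t)
    (fun t i j => hasDerivAt_line (dd_smooth (s0 i j) v) x₀ v t)
    (fun t i j => hasDerivAt_line (dd_smooth (dd_smooth (s0 i j) v) v) x₀ v t)
    (fun t => hdet _)
    (by ext i j; simp [he, Matrix.one_apply])
  simp only [Matrix.trace, Matrix.diag, Matrix.mul_apply, Matrix.of_apply, zero_smul,
    add_zero] at d1 d2 d3
  have c1 : ∀ i j, dd (e i) (dd (e j) u) = dd (e j) (dd (e i) u) := fun i j => dd_comm hu _ _
  refine ⟨d1, ?_, ?_⟩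
  · rw [d2]
    refine Finset.sum_congr rfl fun i _ => Finset.sum_congr rfl fun j _ => ?_
    rw [c1 j i]
  · rw [d3]
    congr 2
    · refine Finset.sum_congr rfl fun i _ => Finset.sum_congr rfl fun j _ => ?_
      rw [c1 j i]
    · refine Finset.sum_congr rfl fun i _ => ?_
      rw [Finset.sum_comm]
      refine Finset.sum_congr rfl fun j _ => ?_
      rw [Finset.sum_mul]

end Basis
section StepOne
variable {n : ℕ} {u : EuclideanSpace ℝ (Fin n) → ℝ}

theorem dd_inner_sum (hu : ContDiff ℝ (⊤ : ℕ∞) u) (a x : EuclideanSpace ℝ (Fin n))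
    (c : Fin n → ℝ) (e : Fin n → EuclideanSpace ℝ (Fin n)) :
    dd a (dd (∑ j, c j • e j) u) x = ∑ j, c j * dd a (dd (e j) u) x := by
  rw [dd_comm hu, dd_sum]
  refine Finset.sum_congr rfl fun j _ => ?_
  rw [dd_comm hu]

theorem dd_orth (hu : ContDiff ℝ (⊤ : ℕ∞) u) (x₀ : EuclideanSpace ℝ (Fin n))
    (e : Fin n → EuclideanSpace ℝ (Fin n))
    (he : ∀ i j, dd (e i) (dd (e j) u) x₀ = if i = j then 1 else 0) (c d : Fin n → ℝ) :
    dd (∑ j, c j • e j) (dd (∑ j, d j • e j) u) x₀ = ∑ j, c j * d j := by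
  rw [dd_sum]
  refine Finset.sum_congr rfl fun i _ => ?_
  rw [dd_inner_sum hu]
  simp [he]

theorem trace_ineq (M : Fin n → Fin n → ℝ) (p : Fin n → ℝ) (htr : ∑ i, M i i = 0) :
    (n : ℝ) ^ 2 * (∑ i, p i * ∑ j, M i j * p j) ^ 2 ≤
      (∑ i, ∑ j, M i j * M i j) * ((n : ℝ) * (n - 1) * (∑ i, p i * p i) ^ 2) := by
  set P := ∑ i, p i * p i with hP
  have cs := Finset.sum_mul_sq_le_sq_mul_sq (Finset.univ : Finset (Fin n × Fin n))
    (fun z => M z.1 z.2) (fun z => (n : ℝ) * (p z.1 * p z.2) - P * if z.1 = z.2 then 1 else 0)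
  simp only [← Finset.univ_product_univ, Finset.sum_product] at cs
  have e1 : ∑ x, ∑ y, M x y * ((n : ℝ) * (p x * p y) - P * if x = y then 1 else 0) =
      n * ∑ i, p i * ∑ j, M i j * p j := by
    have : ∀ x, ∑ y, M x y * ((n : ℝ) * (p x * p y) - P * if x = y then 1 else 0) =
      n * (p x * ∑ j, M x j * p j) - P * M x x := by
      intro x
      simp only [mul_sub, Finset.sum_sub_distrib, Finset.mul_sum]
      congr 1
      · exact Finset.sum_congr rfl fun j _ => by ring
      · simp [mul_comm]
    simp only [this, Finset.sum_sub_distrib, ← Finset.mul_sum, htr]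
    ring
  have e2 : ∑ x, ∑ y, ((n : ℝ) * (p x * p y) - P * if x = y then 1 else 0) ^ 2 =
      (n : ℝ) * (n - 1) * P ^ 2 := by
    have : ∀ x, ∑ y, ((n : ℝ) * (p x * p y) - P * if x = y then 1 else 0) ^ 2 =
      (n : ℝ) ^ 2 * P * (p x * p x) - 2 * n * P * (p x * p x) + P ^ 2 := by
      intro x
      have : ∀ y, ((n : ℝ) * (p x * p y) - P * if x = y then 1 else 0) ^ 2 =
        ((n : ℝ) ^ 2 * (p x * p x)) * (p y * p y) +
          (if x = y then (- 2 * n * P * (p x * p y) + P ^ 2) else 0) := by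
        intro y
        split_ifs <;> ring
      simp only [this, Finset.sum_add_distrib, ← Finset.mul_sum, ← hP]
      simp
      ring
    simp only [this, Finset.sum_add_distrib, Finset.sum_sub_distrib, ← Finset.mul_sum, ← hP]
    simp
    ring
  rw [e1, e2] at cs
  simp only [pow_two (M _ _)] at cs
  linarith [cs, mul_pow (n : ℝ) (∑ i, p i * ∑ j, M i j * p j) 2]

theorem alg_final {k : ℕ} {s P N Q : ℝ} (hs : 0 < s) (hP : 0 < P)
    (h1 : s * Q = (2 * s - (k + 2) * P) * P)
    (h2 : ((k : ℝ) + 2) ^ 2 * Q ^ 2 ≤ N * ((k + 2) * (k + 1) * P ^ 2))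
    (h3 : -(((k : ℝ) + 2) ^ 2 + (k + 2)) * P ^ 2 - (k + 2) ^ 2 * s * P + 2 * (k + 2) * s ^ 2
      + s ^ 2 * N ≤ 0) : P ≤ s * ((k + 2) ^ 2 + 3 * (k + 2)) := by
  have hk : (0 : ℝ) ≤ k := Nat.cast_nonneg k
  have h4 : ((k : ℝ) + 2) * (2 * s - (k + 2) * P) ^ 2 ≤ (k + 1) * (s ^ 2 * N) := by
    have : ((k : ℝ) + 2) * P ^ 2 * (((k : ℝ) + 2) * (2 * s - (k + 2) * P) ^ 2) ≤
        ((k : ℝ) + 2) * P ^ 2 * ((k + 1) * (s ^ 2 * N)) := by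
      have := mul_le_mul_of_nonneg_left h2 (sq_nonneg s)
      have e : s ^ 2 * (((k : ℝ) + 2) ^ 2 * Q ^ 2) = ((k : ℝ) + 2) ^ 2 * (s * Q) ^ 2 := by ring
      rw [e, h1] at this
      linarith
    exact le_of_mul_le_mul_left this (by positivity)
  have h5 := mul_le_mul_of_nonneg_left h3 (by linarith : (0:ℝ) ≤ k + 1)
  have h6 : ((k : ℝ) + 2) * P * P ≤ (k + 2) * P * (s * ((k + 2) ^ 2 + 3 * (k + 2))) := by
    have : 0 ≤ (k + 1) * (2 * (k + 2) * s ^ 2) + ((k : ℝ) + 2) * 4 * s ^ 2 := by positivity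
    nlinarith [this, h4, h5]
  exact le_of_mul_le_mul_left h6 (by positivity)

end StepOne
theorem step1_point {k : ℕ} {u : EuclideanSpace ℝ (Fin (k + 2)) → ℝ}
    (hu : ContDiff ℝ (⊤ : ℕ∞) u) (hconv : ConvexOn ℝ Set.univ u)
    (hMA : ∀ x, (hessianMatrix u x).det = 1) (x₀ ξ₀ : EuclideanSpace ℝ (Fin (k + 2)))
    (h m : ℝ) (hs : 0 < h - u x₀) (hξ₀ : ξ₀ ≠ 0)
    (hmax : ∀ᶠ x in nhds x₀, ∀ ξ, (h - u x) ^ (k + 2) * (dd ξ u x) ^ 2 ≤ m * dd ξ (dd ξ u) x)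
    (heq : (h - u x₀) ^ (k + 2) * (dd ξ₀ u x₀) ^ 2 = m * dd ξ₀ (dd ξ₀ u) x₀) :
    m ≤ (h - u x₀) ^ (k + 3) * ((k + 2) ^ 2 + 3 * (k + 2)) := by
  obtain ⟨e, he, hdet, hexp⟩ := exists_basis hu hconv hMA x₀
  set s := h - u x₀ with hsdef
  set p : Fin (k + 2) → ℝ := fun j => dd (e j) u x₀ with hp
  set P : ℝ := ∑ j, p j * p j with hP
  set pv : EuclideanSpace ℝ (Fin (k + 2)) := ∑ j, p j • e j with hpv
  have hPnn : 0 ≤ P := Finset.sum_nonneg fun j _ => mul_self_nonneg _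
  have hpvu : dd pv u x₀ = P := by rw [hpv, dd_sum]
  have hpvpv : dd pv (dd pv u) x₀ = P := by rw [hpv, dd_orth hu x₀ e he]
  have hmle : m ≤ s ^ (k + 2) * P := by
    set c : Fin (k + 2) → ℝ := fun j => dd ξ₀ (dd (e j) u) x₀ with hc
    have hξc : ξ₀ = ∑ j, c j • e j := hexp ξ₀
    have h1 : dd ξ₀ u x₀ = ∑ j, c j * p j := by rw [hξc, dd_sum]
    have h2 : dd ξ₀ (dd ξ₀ u) x₀ = ∑ j, c j * c j := by rw [hξc, dd_orth hu x₀ e he]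
    have h3 : 0 < dd ξ₀ (dd ξ₀ u) x₀ := dd2_pos hu hconv hMA x₀ hξ₀
    have cs := Finset.sum_mul_sq_le_sq_mul_sq Finset.univ c p
    simp only [pow_two (c _), pow_two (p _)] at cs
    rw [← h1, ← h2, ← hP] at cs
    have : m * dd ξ₀ (dd ξ₀ u) x₀ ≤ (s ^ (k + 2) * P) * dd ξ₀ (dd ξ₀ u) x₀ := by
      rw [← heq]
      calc s ^ (k + 2) * (dd ξ₀ u x₀) ^ 2 ≤ s ^ (k + 2) * (dd ξ₀ (dd ξ₀ u) x₀ * P) :=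
            mul_le_mul_of_nonneg_left cs (by positivity)
        _ = _ := by ring
    exact le_of_mul_le_mul_right this h3
  rcases hPnn.eq_or_lt with hP0 | hPpos
  · rw [← hP0] at hmle
    have : 0 ≤ s ^ (k + 3) * (((k : ℝ) + 2) ^ 2 + 3 * (k + 2)) := by positivity
    linarith
  have hm : m = s ^ (k + 2) * P := by
    apply le_antisymm hmle
    have h1 := hmax.self_of_nhds pv
    rw [hpvu, hpvpv, ← hsdef] at h1
    have : s ^ (k + 2) * P * P ≤ m * P := by linarith
    exact le_of_mul_le_mul_right this hPpos
  set M : Fin (k + 2) → Fin (k + 2) → ℝ := fun i j => dd pv (dd (e i) (dd (e j) u)) x₀ with hM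
  set K : Fin (k + 2) → ℝ := fun i => dd pv (dd pv (dd (e i) (dd (e i) u))) x₀ with hK
  set N : Fin (k + 2) → ℝ := fun i => ∑ j, M i j * M i j with hN
  set Y : Fin (k + 2) → ℝ := fun i => ∑ j, M i j * p j with hY
  obtain ⟨tr1, tr2, -⟩ := trace_ids hu x₀ e he hdet pv
  have hse : ∀ v, ContDiff ℝ (⊤ : ℕ∞) (dd v u) := dd_smooth hu
  have hS : ∀ i, s * (2 * p i - Y i) = (k + 2) * P * p i ∧
      ((k + 2) * (k + 1) * (p i * p i) * P ^ 2 - (k + 2) * s * P ^ 2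
        - 4 * (k + 2) * P * (p i * (s * (2 * p i - Y i))) + 2 * (s * (2 * p i - Y i)) ^ 2
        + 2 * s ^ 2 * P * (2 - M i i) - s ^ 2 * P * (K i - 2 * N i + 2) ≤ 0) := by
    intro i
    set c : Fin (k + 2) → ℝ := fun j => (if i = j then 1 else 0) - M i j with hc
    set b : EuclideanSpace ℝ (Fin (k + 2)) := ∑ j, c j • e j with hb
    have J := ((((J2.const h).sub (J2_line hu x₀ (e i))).pow k).mul
      ((J2_one hu x₀ (e i) pv b).pow 0)).sub ((J2.const m).mul (J2_two hu x₀ (e i) pv b))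
    have hloc : IsLocalMax (fun t : ℝ => (h - u (x₀ + t • e i)) ^ (k + 2) *
        dd (pv + t • b) u (x₀ + t • e i) ^ (0 + 2) -
        m * dd (pv + t • b) (dd (pv + t • b) u) (x₀ + t • e i)) 0 := by
      have hcont : Filter.Tendsto (fun t : ℝ => x₀ + t • e i) (nhds 0) (nhds x₀) := by
        have : Continuous (fun t : ℝ => x₀ + t • e i) := by fun_prop
        simpa using this.tendsto 0
      filter_upwards [hcont.eventually hmax] with t ht
      have h1 := ht (pv + t • b)
      simp only [zero_smul, add_zero, hpvu, hpvpv, ← hsdef, hm] at h1 ⊢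
      simp only [zero_add]
      linarith
    obtain ⟨J1, J2'⟩ := J.of_max hloc
    have v1 : dd (e i) (dd pv u) x₀ = p i := by
      rw [hpv, dd_inner_sum hu]; simp [he]
    have v2 : dd b u x₀ = p i - Y i := by
      rw [hb, dd_sum]
      simp [hc, hY, sub_mul, Finset.sum_sub_distrib, hp]
    have v3 : dd (e i) (dd (e i) (dd pv u)) x₀ = M i i := by
      rw [dd_comm hu (e i) pv, dd_comm (hse (e i)) (e i) pv]
    have v4 : dd (e i) (dd b u) x₀ = 1 - M i i := by
      rw [hb, dd_inner_sum hu]; simp [he, hc]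
    have v5 : dd (e i) (dd pv (dd pv u)) x₀ = Y i := by
      rw [dd_comm (hse pv) (e i) pv, dd_comm hu (e i) pv]
      conv_lhs => rw [hpv]
      rw [dd_sum]
      refine Finset.sum_congr rfl fun j _ => ?_
      rw [← hpv, dd_comm (hse (e i)) (e j) pv, dd_comm hu (e j) (e i), mul_comm]
    have v6 : dd pv (dd b u) x₀ = p i - Y i := by
      rw [hb, hpv, dd_orth hu x₀ e he]
      simp [hc, hY, mul_sub, Finset.sum_sub_distrib, mul_comm]
    have v7 : dd (e i) (dd (e i) (dd pv (dd pv u))) x₀ = K i := by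
      rw [dd_comm (hse pv) (e i) pv, dd_comm hu (e i) pv,
        dd_comm (dd_smooth (hse (e i)) pv) (e i) pv, dd_comm (hse (e i)) (e i) pv]
    have v8 : dd (e i) (dd pv (dd b u)) x₀ = M i i - N i := by
      rw [dd_comm hu pv b, dd_comm (hse pv) (e i) b, hb, dd_sum]
      have : ∀ j, dd (e j) (dd (e i) (dd pv u)) x₀ = M i j := by
        intro j
        rw [dd_comm hu (e i) pv, dd_comm (hse (e i)) (e j) pv, dd_comm hu (e j) (e i)]
      simp only [this]
      simp [hc, hN, sub_mul, Finset.sum_sub_distrib]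
    have v9 : dd b (dd b u) x₀ = 1 - 2 * M i i + N i := by
      rw [hb, dd_orth hu x₀ e he]
      have : ∀ j, c j * c j = (if i = j then 1 - 2 * M i j else 0) + M i j * M i j := by
        intro j
        simp only [hc]
        split_ifs <;> ring
      simp only [this, Finset.sum_add_distrib]
      simp [hN]
    have v10 : dd (e i) (dd (e i) u) x₀ = 1 := by simp [he]
    have v11 : dd (e i) u x₀ = p i := rfl
    rw [hpvu, v1, v2, v5, v6, ← hsdef, hm, v11] at J1
    rw [hpvu, hpvpv, v1, v2, v3, v4, v5, v6, v7, v8, v9, v10, ← hsdef, hm, v11] at J2'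
    have hs1 : 0 < s ^ (k + 1) * P := by positivity
    have F1 : s * (2 * p i - Y i) = (k + 2) * P * p i := by
      have : s ^ (k + 1) * P * (s * (2 * p i - Y i)) = s ^ (k + 1) * P * ((k + 2) * P * p i) := by
        have e1 : s ^ (k + 2) = s ^ (k + 1) * s := pow_succ _ _
        rw [e1] at J1
        norm_num at J1
        linarith
      exact mul_left_cancel₀ hs1.ne' this
    refine ⟨F1, ?_⟩
    have hs2 : 0 < s ^ k := by positivity
    have e1 : s ^ (k + 1) = s ^ k * s := pow_succ _ _
    have e2 : s ^ (k + 2) = s ^ k * s ^ 2 := pow_add _ _ _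
    rw [e1, e2] at J2'
    norm_num at J2'
    rw [← sub_nonpos] at J2'
    refine le_of_mul_le_mul_left (a := s ^ k) ?_ hs2
    rw [mul_zero]
    refine le_trans (le_of_eq ?_) J2'
    ring
  have hQ : s * (∑ i, p i * Y i) = (2 * s - (k + 2) * P) * P := by
    have : ∀ i, s * (p i * Y i) = (2 * s - (k + 2) * P) * (p i * p i) := by
      intro i
      have := (hS i).1
      linear_combination (-p i) * this
    rw [Finset.mul_sum, Finset.sum_congr rfl fun i _ => this i, ← Finset.mul_sum]
  have hfin : P ≤ s * ((k + 2) ^ 2 + 3 * (k + 2)) := by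
    refine alg_final (k := k) (N := ∑ i, N i) hs hPpos hQ ?_ ?_
    · have := trace_ineq M p tr1
      push_cast at this
      refine this.trans (le_of_eq ?_)
      simp only [hN, ← hP]
      ring
    · have hsum := Finset.sum_nonpos fun i (_ : i ∈ Finset.univ) => (hS i).2
      have : ∀ i, ((k + 2) * (k + 1) * (p i * p i) * P ^ 2 - (k + 2) * s * P ^ 2
        - 4 * (k + 2) * P * (p i * (s * (2 * p i - Y i))) + 2 * (s * (2 * p i - Y i)) ^ 2
        + 2 * s ^ 2 * P * (2 - M i i) - s ^ 2 * P * (K i - 2 * N i + 2)) =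
          (-((k : ℝ) + 2) ^ 2 - (k + 2)) * P ^ 2 * (p i * p i) + (2 * s ^ 2 * P - (k + 2) * s * P ^ 2)
          - 2 * s ^ 2 * P * M i i - s ^ 2 * P * K i + 2 * s ^ 2 * P * N i := by
        intro i
        rw [(hS i).1]
        ring
      simp only [this, Finset.sum_add_distrib, Finset.sum_sub_distrib, ← Finset.mul_sum] at hsum
      have t1 : ∑ i, M i i = 0 := tr1
      have t2 : ∑ i, K i = ∑ i, N i := tr2
      rw [t1, t2, ← hP] at hsum
      simp only [Finset.sum_const, Finset.card_univ, Fintype.card_fin, nsmul_eq_mul] at hsum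
      push_cast at hsum
      refine le_of_mul_le_mul_left (a := P) ?_ hPpos
      rw [mul_zero]
      refine le_trans (le_of_eq ?_) hsum
      ring
  rw [hm]
  calc s ^ (k + 2) * P ≤ s ^ (k + 2) * (s * ((k + 2) ^ 2 + 3 * (k + 2))) :=
        mul_le_mul_of_nonneg_left hfin (by positivity)
    _ = _ := by ring
section StepTwo

theorem dd_zero' {n : ℕ} (f : EuclideanSpace ℝ (Fin n) → ℝ) (x : EuclideanSpace ℝ (Fin n)) :
    dd 0 f x = 0 := by simp [dd]

theorem dd2_smul {n : ℕ} {u : EuclideanSpace ℝ (Fin n) → ℝ} (hu : ContDiff ℝ (⊤ : ℕ∞) u)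
    (r : ℝ) (ξ x : EuclideanSpace ℝ (Fin n)) :
    dd (r • ξ) (dd (r • ξ) u) x = r ^ 2 * dd ξ (dd ξ u) x := by
  rw [dd_smul, dd_smul, dd_fsmul _ (dd_smooth hu ξ)]
  simp only [Pi.smul_apply, smul_eq_mul]; ring

theorem dd3_smul {n : ℕ} {u : EuclideanSpace ℝ (Fin n) → ℝ} (hu : ContDiff ℝ (⊤ : ℕ∞) u)
    (r : ℝ) (ξ x : EuclideanSpace ℝ (Fin n)) :
    dd (r • ξ) (dd (r • ξ) (dd (r • ξ) u)) x = r ^ 3 * dd ξ (dd ξ (dd ξ u)) x := by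
  have h1 := dd_smooth hu ξ
  have h2 := dd_smooth h1 ξ
  have h3 : ContDiff ℝ (⊤ : ℕ∞) (r • dd ξ (dd ξ u)) := h2.const_smul r
  rw [dd_smul, dd_smul, dd_smul, dd_fsmul _ h1, dd_fsmul _ h3, dd_fsmul _ h2]
  simp only [Pi.smul_apply, smul_eq_mul]; ring

theorem tendsto_line {n : ℕ} (x d : EuclideanSpace ℝ (Fin n)) :
    Filter.Tendsto (fun t : ℝ => x + t • d) (nhds 0) (nhds x) := by
  have : Continuous (fun t : ℝ => x + t • d) := by fun_prop
  simpa using this.tendsto 0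

theorem step2_point {k : ℕ} {u : EuclideanSpace ℝ (Fin (k + 2)) → ℝ}
    (hu : ContDiff ℝ (⊤ : ℕ∞) u) (hconv : ConvexOn ℝ Set.univ u)
    (hMA : ∀ x, (hessianMatrix u x).det = 1) (x₀ ξ₀ : EuclideanSpace ℝ (Fin (k + 2)))
    (h m B : ℝ) (hs : 0 < h - u x₀) (hξ₀ : ξ₀ ≠ 0) (hB : 0 ≤ B)
    (hgrad : ∀ ξ, (dd ξ u x₀) ^ 2 ≤ B * dd ξ (dd ξ u) x₀)
    (hmax : ∀ᶠ x in nhds x₀, ∀ ξ, (h - u x) ^ 2 * (dd ξ (dd ξ (dd ξ u)) x) ^ 2 ≤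
      m * dd ξ (dd ξ u) x ^ 3)
    (heq : (h - u x₀) ^ 2 * (dd ξ₀ (dd ξ₀ (dd ξ₀ u)) x₀) ^ 2 = m * dd ξ₀ (dd ξ₀ u) x₀ ^ 3) :
    m ≤ 8 * B + 4 * (k + 2) * (h - u x₀) := by
  obtain ⟨e, he, hdet, hexp⟩ := exists_basis hu hconv hMA x₀
  set s := h - u x₀ with hsdef
  have hse : ∀ v, ContDiff ℝ (⊤ : ℕ∞) (dd v u) := dd_smooth hu
  -- normalisation of the direction
  obtain ⟨ev, lam, hlam, hev1, hev2, hm⟩ : ∃ (ev : EuclideanSpace ℝ (Fin (k + 2))) (lam : ℝ),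
      0 ≤ lam ∧ dd ev (dd ev u) x₀ = 1 ∧ dd ev (dd ev (dd ev u)) x₀ = lam ∧
      m = s ^ 2 * lam ^ 2 := by
    have hc0 : 0 < dd ξ₀ (dd ξ₀ u) x₀ := dd2_pos hu hconv hMA x₀ hξ₀
    obtain ⟨r, hr, hr2⟩ : ∃ r : ℝ, r ^ 2 * dd ξ₀ (dd ξ₀ u) x₀ = 1 ∧
        0 ≤ r ^ 3 * dd ξ₀ (dd ξ₀ (dd ξ₀ u)) x₀ := by
      set q := (Real.sqrt (dd ξ₀ (dd ξ₀ u) x₀))⁻¹ with hq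
      have hqp : 0 < q := by positivity
      have hq2 : q ^ 2 * dd ξ₀ (dd ξ₀ u) x₀ = 1 := by
        rw [hq, inv_pow, Real.sq_sqrt hc0.le, inv_mul_cancel₀ hc0.ne']
      rcases le_total 0 (dd ξ₀ (dd ξ₀ (dd ξ₀ u)) x₀) with h0 | h0
      · exact ⟨q, hq2, by positivity⟩
      · refine ⟨-q, by rw [neg_sq]; exact hq2, ?_⟩
        have : (-q) ^ 3 * dd ξ₀ (dd ξ₀ (dd ξ₀ u)) x₀ = q ^ 3 * (-dd ξ₀ (dd ξ₀ (dd ξ₀ u)) x₀) := by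
          ring
        rw [this]
        exact mul_nonneg (by positivity) (by linarith)
    refine ⟨r • ξ₀, _, hr2, by rw [dd2_smul hu, hr], dd3_smul hu _ _ _, ?_⟩
    have h1 : r ^ 6 * (m * dd ξ₀ (dd ξ₀ u) x₀ ^ 3) = m := by
      have : r ^ 6 * (m * dd ξ₀ (dd ξ₀ u) x₀ ^ 3) = m * (r ^ 2 * dd ξ₀ (dd ξ₀ u) x₀) ^ 3 := by ring
      rw [this, hr]; ring
    rw [← heq] at h1
    rw [← h1]; ring
  rcases hlam.eq_or_lt with hl0 | hlpos
  · rw [hm, ← hl0]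
    have : 0 ≤ 8 * B + 4 * ((k : ℝ) + 2) * s := by positivity
    simpa using this
  set p : Fin (k + 2) → ℝ := fun j => dd (e j) u x₀ with hp
  set P : ℝ := ∑ j, p j * p j with hP
  have hPnn : 0 ≤ P := Finset.sum_nonneg fun j _ => mul_self_nonneg _
  have hPB : P ≤ B := by
    have h1 := hgrad (∑ j, p j • e j)
    rw [dd_orth hu x₀ e he, dd_sum, ← hP] at h1
    rcases hPnn.eq_or_lt with h0 | h0
    · rw [← h0]; exact hB
    · exact le_of_mul_le_mul_right (by linarith [pow_two P] : P * P ≤ B * P) h0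
  set ε : Fin (k + 2) → ℝ := fun j => dd ev (dd (e j) u) x₀ with hε
  have hevε : ev = ∑ j, ε j • e j := hexp ev
  have hεsum : ∑ j, ε j * ε j = 1 := by
    rw [← dd_orth hu x₀ e he, ← hevε, hev1]
  -- variations of the direction only
  have hvar : ∀ w, dd ev (dd ev (dd w u)) x₀ = lam * dd ev (dd w u) x₀ ∧
      dd ev (dd w (dd w u)) x₀ ≤ lam * dd w (dd w u) x₀ := by
    intro w
    have J := ((J2.const (s ^ 2)).mul ((J2_three hu x₀ 0 ev w).pow 0)).sub
      ((J2.const m).mul ((J2_two hu x₀ 0 ev w).pow 1))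
    have hloc := J.of_max (by
      refine Filter.Eventually.of_forall fun t => ?_
      have h1 := hmax.self_of_nhds (ev + t • w)
      simp only [smul_zero, zero_smul, add_zero, zero_add, hev1, hev2, ← hsdef] at h1 ⊢
      rw [hm] at h1 ⊢
      norm_num
      linarith)
    simp only [dd_zero', hev1, hev2] at hloc
    rw [hm] at hloc
    norm_num at hloc
    obtain ⟨l1, l2⟩ := hloc
    have hpos : 0 < s ^ 2 * lam := by positivity
    have F1 : dd ev (dd ev (dd w u)) x₀ = lam * dd ev (dd w u) x₀ := by
      have : s ^ 2 * lam * (dd ev (dd ev (dd w u)) x₀) = s ^ 2 * lam * (lam * dd ev (dd w u) x₀) := by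
        linarith
      exact mul_left_cancel₀ hpos.ne' this
    refine ⟨F1, ?_⟩
    have cs : dd ev (dd w u) x₀ ^ 2 ≤ dd w (dd w u) x₀ := by
      have hw := hexp w
      set c : Fin (k + 2) → ℝ := fun j => dd w (dd (e j) u) x₀ with hc
      have := Finset.sum_mul_sq_le_sq_mul_sq Finset.univ ε c
      simp only [pow_two (ε _), pow_two (c _)] at this
      rw [hεsum, one_mul] at this
      rw [hevε, hw, dd_orth hu x₀ e he, dd_orth hu x₀ e he]
      exact this
    rw [F1] at l2
    have l3 : s ^ 2 * lam * (12 * dd ev (dd w (dd w u)) x₀) ≤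
        s ^ 2 * lam * (12 * (lam * dd w (dd w u) x₀)) := by
      have := mul_le_mul_of_nonneg_left cs (by positivity : 0 ≤ 6 * (s ^ 2 * lam ^ 2))
      nlinarith [this, l2]
    linarith [le_of_mul_le_mul_left l3 hpos]
  set M : Fin (k + 2) → Fin (k + 2) → ℝ := fun i j => dd ev (dd (e i) (dd (e j) u)) x₀ with hM
  set Q : Fin (k + 2) → Fin (k + 2) → ℝ := fun i j => dd ev (dd ev (dd (e i) (dd (e j) u))) x₀
    with hQ
  set V : Fin (k + 2) → ℝ := fun i => dd ev (dd ev (dd ev (dd (e i) (dd (e i) u)))) x₀ with hV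
  set N : Fin (k + 2) → ℝ := fun i => ∑ j, M i j * M i j with hN
  set W : Fin (k + 2) → ℝ := fun i => ∑ j, M i j * Q i j with hW
  set R : Fin (k + 2) → ℝ := fun i => ∑ j, ∑ l, M i j * M j l * M l i with hR
  obtain ⟨-, tr2, tr3⟩ := trace_ids hu x₀ e he hdet ev
  have Msymm : ∀ i j, M i j = M j i := by
    intro i j
    simp only [hM]
    rw [dd_comm hu (e i) (e j)]
  have hMε : ∀ i, ∑ j, M i j * ε j = lam * ε i := by
    intro i
    rw [← (hvar (e i)).1]
    conv_rhs => rw [hevε]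
    rw [dd_sum, ← hevε]
    refine Finset.sum_congr rfl fun j _ => ?_
    rw [dd_comm (hse (e i)) (e j) ev, dd_comm hu (e j) (e i), mul_comm]
  have tri : ∀ c : Fin (k + 2) → ℝ, dd ev (dd (∑ j, c j • e j) (dd (∑ j, c j • e j) u)) x₀ =
      ∑ j, ∑ l, c j * M j l * c l := by
    intro c
    set b := ∑ j, c j • e j with hb
    rw [dd_comm (hse b) ev b]
    conv_lhs => rw [hb]
    rw [dd_sum, ← hb]
    refine Finset.sum_congr rfl fun j _ => ?_
    rw [dd_comm hu ev b, dd_comm (hse ev) (e j) b, hb, dd_sum, Finset.mul_sum]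
    refine Finset.sum_congr rfl fun l _ => ?_
    rw [dd_comm hu (e j) ev, dd_comm (hse (e j)) (e l) ev, dd_comm hu (e l) (e j)]
    simp only [hM]
    ring
  have hRN : ∀ i, R i ≤ lam * N i := by
    intro i
    have h1 := (hvar (∑ j, M i j • e j)).2
    rw [tri, dd_orth hu x₀ e he] at h1
    refine le_trans (le_of_eq ?_) h1
    refine Finset.sum_congr rfl fun j _ => Finset.sum_congr rfl fun l _ => ?_
    rw [Msymm l i]
  have hNlam : lam ^ 2 ≤ ∑ i, N i := by
    have : ∀ i, lam ^ 2 * (ε i * ε i) ≤ N i := by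
      intro i
      have cs := Finset.sum_mul_sq_le_sq_mul_sq Finset.univ (M i) ε
      simp only [pow_two (ε _), pow_two (M _ _)] at cs
      rw [hεsum, mul_one, hMε] at cs
      refine le_trans (le_of_eq ?_) cs
      ring
    have := Finset.sum_le_sum fun i (_ : i ∈ Finset.univ) => this i
    rwa [← Finset.mul_sum, hεsum, mul_one] at this
  have hS : ∀ i, 2 * (p i * p i) * lam ^ 2 - 2 * s * lam ^ 2 - 8 * lam ^ 2 * (p i * p i)
      + 2 * lam ^ 2 * (p i * p i) + 2 * s ^ 2 * lam * (V i - 3 * W i + 3 / 2 * R i)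
      - 3 * s ^ 2 * lam ^ 2 * (Q i i - 3 / 2 * N i) ≤ 0 := by
    intro i
    set c : Fin (k + 2) → ℝ := fun j => (-1 / 2) * M i j with hc
    set b : EuclideanSpace ℝ (Fin (k + 2)) := ∑ j, c j • e j with hb
    have J := ((((J2.const h).sub (J2_line hu x₀ (e i))).pow 0).mul
      ((J2_three hu x₀ (e i) ev b).pow 0)).sub
      ((J2.const m).mul ((J2_two hu x₀ (e i) ev b).pow 1))
    have hloc := J.of_max (by
      filter_upwards [(tendsto_line x₀ (e i)).eventually hmax] with t ht
      have h1 := ht (ev + t • b)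
      simp only [zero_smul, add_zero, zero_add, hev1, hev2, ← hsdef] at h1 ⊢
      rw [hm] at h1 ⊢
      norm_num
      linarith)
    obtain ⟨J1, J2'⟩ := hloc
    set X := dd (e i) (dd ev (dd ev (dd ev u))) x₀ + 3 * dd ev (dd ev (dd b u)) x₀ with hX
    have v0 : dd (e i) u x₀ = p i := rfl
    have v1 : dd ev (dd b u) x₀ = -1 / 2 * (lam * ε i) := by
      rw [hb, dd_inner_sum hu, ← hMε, Finset.mul_sum]
      refine Finset.sum_congr rfl fun j _ => ?_
      simp only [hc, hε]; ring
    have v2 : dd (e i) (dd ev (dd ev u)) x₀ = lam * ε i := by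
      rw [dd_comm (hse ev) (e i) ev, dd_comm hu (e i) ev, (hvar (e i)).1]
    have v3 : dd (e i) (dd (e i) (dd ev (dd ev u))) x₀ = Q i i := by
      rw [dd_comm (hse ev) (e i) ev, dd_comm hu (e i) ev,
        dd_comm (dd_smooth (hse (e i)) ev) (e i) ev, dd_comm (hse (e i)) (e i) ev]
    have v4 : dd (e i) (dd ev (dd b u)) x₀ = -1 / 2 * N i := by
      rw [dd_comm hu ev b, dd_comm (hse ev) (e i) b, hb, dd_sum]
      simp only [hN, Finset.mul_sum]
      refine Finset.sum_congr rfl fun j _ => ?_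
      rw [dd_comm hu (e i) ev, dd_comm (hse (e i)) (e j) ev, dd_comm hu (e j) (e i)]
      simp only [hc, hM]; ring
    have v5 : dd b (dd b u) x₀ = 1 / 4 * N i := by
      rw [hb, dd_orth hu x₀ e he]
      simp only [hN, Finset.mul_sum]
      refine Finset.sum_congr rfl fun j _ => ?_
      simp only [hc]; ring
    have v6 : dd (e i) (dd (e i) (dd ev (dd ev (dd ev u)))) x₀ = V i := by
      have a1 : dd (e i) (dd ev (dd ev (dd ev u))) = dd ev (dd ev (dd ev (dd (e i) u))) := by
        rw [dd_comm (dd_smooth (hse ev) ev) (e i) ev, dd_comm (hse ev) (e i) ev,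
          dd_comm hu (e i) ev]
      have hi := hse (e i)
      rw [a1, dd_comm (dd_smooth (dd_smooth hi ev) ev) (e i) ev,
        dd_comm (dd_smooth hi ev) (e i) ev, dd_comm hi (e i) ev]
    have v7 : dd (e i) (dd ev (dd ev (dd b u))) x₀ = -1 / 2 * W i := by
      have hi := hse (e i)
      have a1 : dd (e i) (dd ev (dd ev (dd b u))) = dd b (dd ev (dd ev (dd (e i) u))) := by
        rw [dd_comm (dd_smooth (hse b) ev) (e i) ev, dd_comm (hse b) (e i) ev,
          dd_comm hu (e i) b, dd_comm hi ev b, dd_comm (dd_smooth hi ev) ev b]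
      rw [a1, hb, dd_sum]
      simp only [hW, Finset.mul_sum]
      refine Finset.sum_congr rfl fun j _ => ?_
      rw [dd_comm (dd_smooth hi ev) (e j) ev, dd_comm hi (e j) ev, dd_comm hu (e j) (e i)]
      simp only [hc, hQ]; ring
    have v8 : dd ev (dd b (dd b u)) x₀ = 1 / 4 * R i := by
      rw [hb, tri]
      simp only [hR, Finset.mul_sum]
      refine Finset.sum_congr rfl fun j _ => Finset.sum_congr rfl fun l _ => ?_
      simp only [hc]
      rw [Msymm l i]; ring
    have v10 : dd (e i) (dd (e i) u) x₀ = 1 := by simp [he]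
    rw [hev1, hev2, v0, v1, v2, ← hsdef, hm] at J1
    rw [hev1, hev2, v0, v1, v2, v3, v4, v5, v6, v7, v8, v10, ← hsdef, hm] at J2'
    have F1 : s * X = lam * p i := by
      have hpos : 0 < s * lam := by positivity
      have : s * lam * (s * X) = s * lam * (lam * p i) := by
        norm_num at J1
        linarith
      exact mul_left_cancel₀ hpos.ne' this
    have F2 : (s * X) ^ 2 = lam ^ 2 * (p i * p i) := by rw [F1]; ring
    have F3 : p i * (s * X) = lam * (p i * p i) := by rw [F1]; ring
    refine le_trans (le_of_eq ?_) J2'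
    norm_num
    linear_combination (8 * lam) * F3 - 2 * F2
  have hsum := Finset.sum_nonpos fun i (_ : i ∈ Finset.univ) => hS i
  have hsR := Finset.sum_le_sum fun i (_ : i ∈ Finset.univ) => hRN i
  rw [← Finset.mul_sum] at hsR
  have t2 : ∑ i, Q i i = ∑ i, N i := tr2
  have t3 : ∑ i, V i = 3 * (∑ i, W i) - 2 * ∑ i, R i := tr3
  simp only [mul_add, mul_sub, Finset.sum_add_distrib, Finset.sum_sub_distrib, ← Finset.mul_sum,
    ← Finset.sum_mul] at hsum
  rw [← hP, t2, t3] at hsum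
  simp only [Finset.sum_const, Finset.card_univ, Fintype.card_fin, nsmul_eq_mul] at hsum
  push_cast at hsum
  have g1 : s ^ 2 * ∑ i, N i ≤ 8 * P + 4 * (k + 2) * s := by
    have hl2 : 0 < lam ^ 2 := by positivity
    have hq := mul_le_mul_of_nonneg_left hsR (by positivity : 0 ≤ s ^ 2 * lam)
    have : lam ^ 2 * (s ^ 2 * ∑ i, N i) ≤ lam ^ 2 * (8 * P + 4 * (k + 2) * s) := by
      nlinarith [hsum, hq]
    exact le_of_mul_le_mul_left this hl2
  have g2 := mul_le_mul_of_nonneg_left hNlam (sq_nonneg s)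
  rw [hm]
  linarith

end StepTwo


section Final

theorem dd_cont1 {n : ℕ} {f : EuclideanSpace ℝ (Fin n) → ℝ} (hf : ContDiff ℝ (⊤ : ℕ∞) f) :
    Continuous (fun p : EuclideanSpace ℝ (Fin n) × EuclideanSpace ℝ (Fin n) => dd p.2 f p.1) := by
  have h : Continuous (fderiv ℝ f) := hf.continuous_fderiv (by simp)
  exact (h.comp continuous_fst).clm_apply continuous_snd

theorem dd_cont2 {n : ℕ} {f : EuclideanSpace ℝ (Fin n) → ℝ} (hf : ContDiff ℝ (⊤ : ℕ∞) f) :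
    Continuous (fun p : EuclideanSpace ℝ (Fin n) × EuclideanSpace ℝ (Fin n) =>
      dd p.2 (dd p.2 f) p.1) := by
  have e : (fun p : EuclideanSpace ℝ (Fin n) × EuclideanSpace ℝ (Fin n) =>
      dd p.2 (dd p.2 f) p.1) = fun p => ∑ i, p.2 i *
        dd p.2 (dd (EuclideanSpace.single i (1:ℝ)) f) p.1 := by
    funext p
    rw [dd_coord]
    refine Finset.sum_congr rfl fun i _ => ?_
    rw [dd_comm hf]
  rw [e]
  refine continuous_finsetSum _ fun i _ => ?_
  have := dd_cont1 (dd_smooth hf (EuclideanSpace.single i (1:ℝ)))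
  exact Continuous.mul (by fun_prop) this

theorem dd_cont3 {n : ℕ} {f : EuclideanSpace ℝ (Fin n) → ℝ} (hf : ContDiff ℝ (⊤ : ℕ∞) f) :
    Continuous (fun p : EuclideanSpace ℝ (Fin n) × EuclideanSpace ℝ (Fin n) =>
      dd p.2 (dd p.2 (dd p.2 f)) p.1) := by
  have e : (fun p : EuclideanSpace ℝ (Fin n) × EuclideanSpace ℝ (Fin n) =>
      dd p.2 (dd p.2 (dd p.2 f)) p.1) = fun p => ∑ i, p.2 i *
        dd p.2 (dd p.2 (dd (EuclideanSpace.single i (1:ℝ)) f)) p.1 := by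
    funext p
    rw [dd_coord]
    refine Finset.sum_congr rfl fun i _ => ?_
    rw [dd_comm (dd_smooth hf _), dd_comm hf]
  rw [e]
  refine continuous_finsetSum _ fun i _ => ?_
  have := dd_cont2 (dd_smooth hf (EuclideanSpace.single i (1:ℝ)))
  exact Continuous.mul (by fun_prop) this

theorem max_lemma {k : ℕ} (v : EuclideanSpace ℝ (Fin (k + 2)) → ℝ) (h : ℝ)
    (hK : IsCompact {x | v x ≤ h}) (z : EuclideanSpace ℝ (Fin (k + 2))) (hz : v z ≤ h)
    (N D : EuclideanSpace ℝ (Fin (k + 2)) → EuclideanSpace ℝ (Fin (k + 2)) → ℝ)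
    (hN : Continuous fun p : EuclideanSpace ℝ (Fin (k + 2)) × EuclideanSpace ℝ (Fin (k + 2)) =>
      N p.1 p.2)
    (hD : Continuous fun p : EuclideanSpace ℝ (Fin (k + 2)) × EuclideanSpace ℝ (Fin (k + 2)) =>
      D p.1 p.2)
    (hDpos : ∀ x ξ, ξ ≠ 0 → 0 < D x ξ) (hN0 : ∀ x ξ, 0 ≤ N x ξ)
    (hNb : ∀ x ξ, v x = h → N x ξ = 0) (q : ℕ) (hq : q ≠ 0)
    (hNs : ∀ r x ξ, N x (r • ξ) = r ^ q * N x ξ) (hDs : ∀ r x ξ, D x (r • ξ) = r ^ q * D x ξ) :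
    ∃ m : ℝ, 0 ≤ m ∧ (∀ x, v x ≤ h → ∀ ξ, N x ξ ≤ m * D x ξ) ∧
      (m = 0 ∨ ∃ x₀ ξ₀, v x₀ < h ∧ ξ₀ ≠ 0 ∧ N x₀ ξ₀ = m * D x₀ ξ₀) := by
  have hS : IsCompact (Metric.sphere (0 : EuclideanSpace ℝ (Fin (k + 2))) 1) := isCompact_sphere _ _
  have hne : ({x | v x ≤ h} ×ˢ Metric.sphere (0 : EuclideanSpace ℝ (Fin (k + 2))) 1).Nonempty :=
    ⟨(z, EuclideanSpace.single 0 1), hz, by simp⟩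
  have hs0 : ∀ ξ ∈ Metric.sphere (0 : EuclideanSpace ℝ (Fin (k + 2))) 1, ξ ≠ 0 := by
    intro ξ hξ h0
    simp [h0] at hξ
  obtain ⟨⟨x₀, ξ₀⟩, ⟨hx₀, hξ₀⟩, hmax⟩ := (hK.prod hS).exists_isMaxOn hne
    (f := fun p => N p.1 p.2 / D p.1 p.2)
    (ContinuousOn.div hN.continuousOn hD.continuousOn
      (fun p hp => (hDpos _ _ (hs0 _ hp.2)).ne'))
  have hd := hDpos x₀ ξ₀ (hs0 _ hξ₀)
  refine ⟨N x₀ ξ₀ / D x₀ ξ₀, div_nonneg (hN0 _ _) hd.le, ?_, ?_⟩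
  · intro x hx ξ
    by_cases h0 : ξ = 0
    · have h1 := hNs 0 x 0
      have h2 := hDs 0 x 0
      simp [hq] at h1 h2
      simp [h0, h1, h2]
    · have hn : 0 < ‖ξ‖ := norm_pos_iff.2 h0
      have hmem : (‖ξ‖⁻¹ • ξ) ∈ Metric.sphere (0 : EuclideanSpace ℝ (Fin (k + 2))) 1 := by
        simp [norm_smul, hn.ne']
      have h1 := hmax (show (x, ‖ξ‖⁻¹ • ξ) ∈ _ from ⟨hx, hmem⟩)
      simp only [Set.mem_ofPred_eq] at h1
      rw [div_le_iff₀ (hDpos _ _ (hs0 _ hmem)), hNs, hDs] at h1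
      have hp : 0 < ‖ξ‖⁻¹ ^ q := by positivity
      refine le_of_mul_le_mul_left ?_ hp
      linarith
  · rcases lt_or_eq_of_le (show v x₀ ≤ h from hx₀) with hl | he
    · right
      exact ⟨x₀, ξ₀, hl, hs0 _ hξ₀, by field_simp⟩
    · left
      rw [hNb _ _ he, zero_div]

theorem sublevel_compact {n : ℕ} {v : EuclideanSpace ℝ (Fin n) → ℝ}
    (hv : ContDiff ℝ (⊤ : ℕ∞) v) (hconv : ConvexOn ℝ Set.univ v)
    (hMA : ∀ x, (hessianMatrix v x).det = 1) (z : EuclideanSpace ℝ (Fin n))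
    (hz : v z = 0) (hdz : ∀ a, dd a v z = 0) :
    (∀ x, 0 ≤ v x) ∧ ∀ h, IsCompact {x | v x ≤ h} := by
  have hpos : ∀ ξ, ξ ≠ 0 → 0 < v (z + ξ) := by
    intro ξ hξ
    have hm : StrictMono (fun t : ℝ => dd ξ v (z + t • ξ)) := by
      apply strictMono_of_deriv_pos
      intro t
      rw [(hasDerivAt_line (dd_smooth hv ξ) z ξ t).deriv]
      exact dd2_pos hv hconv hMA _ hξ
    have hm2 : StrictMonoOn (fun t : ℝ => v (z + t • ξ)) (Set.Ici 0) := by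
      apply strictMonoOn_of_deriv_pos (convex_Ici 0)
      · have : Continuous v := hv.continuous
        fun_prop
      · intro t ht
        rw [interior_Ici] at ht
        rw [(hasDerivAt_line hv z ξ t).deriv]
        have := hm (show (0:ℝ) < t from ht)
        simpa [hdz] using this
    have := hm2 (Set.self_mem_Ici) (Set.mem_Ici.2 zero_le_one) zero_lt_one
    simpa [hz] using this
  have hnn : ∀ x, 0 ≤ v x := by
    intro x
    by_cases h0 : x = z
    · rw [h0, hz]
    · have := hpos (x - z) (sub_ne_zero.2 h0)
      rw [add_sub_cancel] at this
      exact this.le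
  refine ⟨hnn, fun h => ?_⟩
  have hvc : Continuous v := hv.continuous
  obtain ⟨μ, hμ, hμs⟩ : ∃ μ : ℝ, 0 < μ ∧ ∀ ξ : EuclideanSpace ℝ (Fin n), ‖ξ‖ = 1 → μ ≤ v (z + ξ) := by
    rcases (Metric.sphere (0 : EuclideanSpace ℝ (Fin n)) 1).eq_empty_or_nonempty with he | hne
    · refine ⟨1, one_pos, fun ξ hξ => ?_⟩
      have : ξ ∈ Metric.sphere (0 : EuclideanSpace ℝ (Fin n)) 1 := by simpa using hξ
      rw [he] at this
      exact this.elim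
    · obtain ⟨ξ₀, h1, h2⟩ := (isCompact_sphere (0 : EuclideanSpace ℝ (Fin n)) 1).exists_isMinOn hne
        (f := fun ξ => v (z + ξ)) (by fun_prop)
      refine ⟨v (z + ξ₀), hpos _ ?_, fun ξ hξ => h2 (by simpa using hξ)⟩
      intro h0
      simp [h0] at h1
  refine (isCompact_closedBall z (max 1 (h / μ))).of_isClosed_subset
    (isClosed_le hvc continuous_const) ?_
  intro x hx
  rw [Metric.mem_closedBall, dist_eq_norm]
  by_cases h1 : ‖x - z‖ ≤ 1
  · exact h1.trans (le_max_left _ _)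
  · refine le_trans ?_ (le_max_right _ _)
    push Not at h1
    have hp : 0 < ‖x - z‖ := by linarith
    have h2 := hμs (‖x - z‖⁻¹ • (x - z)) (by simp [norm_smul, hp.ne'])
    have h3 := hconv.2 (Set.mem_univ z) (Set.mem_univ x)
      (show 0 ≤ 1 - ‖x - z‖⁻¹ by have := inv_le_one_of_one_le₀ h1.le; linarith)
      (inv_nonneg.2 hp.le) (by ring)
    have e : (1 - ‖x - z‖⁻¹) • z + ‖x - z‖⁻¹ • x = z + ‖x - z‖⁻¹ • (x - z) := by module
    rw [e, hz] at h3
    simp only [smul_eq_mul, mul_zero, zero_add] at h3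
    rw [le_div_iff₀ hμ]
    have h4 : μ ≤ ‖x - z‖⁻¹ * v x := h2.trans h3
    have h5 : ‖x - z‖ * μ ≤ v x := by
      have := mul_le_mul_of_nonneg_left h4 hp.le
      rwa [← mul_assoc, mul_inv_cancel₀ hp.ne', one_mul] at this
    exact h5.trans hx

theorem step1_global {k : ℕ} {v : EuclideanSpace ℝ (Fin (k + 2)) → ℝ}
    (hv : ContDiff ℝ (⊤ : ℕ∞) v) (hconv : ConvexOn ℝ Set.univ v)
    (hMA : ∀ x, (hessianMatrix v x).det = 1) (z : EuclideanSpace ℝ (Fin (k + 2)))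
    (hz : v z = 0) (hdz : ∀ a, dd a v z = 0) (h : ℝ) (hh : 0 < h)
    (x ξ : EuclideanSpace ℝ (Fin (k + 2))) (hx : v x ≤ h) :
    (h - v x) ^ (k + 2) * (dd ξ v x) ^ 2 ≤
      h ^ (k + 3) * ((k + 2) ^ 2 + 3 * (k + 2)) * dd ξ (dd ξ v) x := by
  obtain ⟨hnn, hK⟩ := sublevel_compact hv hconv hMA z hz hdz
  have hvc : Continuous v := hv.continuous
  have hv1 := dd_cont1 hv
  have hv2 := dd_cont2 hv
  obtain ⟨m, hm0, hm, hor⟩ := max_lemma v (min h h) (by simpa using hK h) z (by simp [hz, hh.le])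
    (fun x ξ => |h - v x| ^ (k + 2) * (dd ξ v x) ^ 2) (fun x ξ => dd ξ (dd ξ v) x)
    (by fun_prop) hv2 (fun x ξ h0 => dd2_pos hv hconv hMA x h0) (fun x ξ => by positivity)
    (fun x ξ he => by simp at he; simp [he]) 2 two_ne_zero
    (fun r x ξ => by rw [dd_smul]; simp only [Pi.smul_apply, smul_eq_mul]; ring)
    (fun r x ξ => dd2_smul hv r ξ x)
  rw [min_self] at hm hor
  have habs : ∀ x, v x ≤ h → |h - v x| = h - v x := fun x hx => abs_of_nonneg (by linarith)
  have hmle : m ≤ h ^ (k + 3) * ((k + 2) ^ 2 + 3 * (k + 2)) := by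
    rcases hor with h0 | ⟨x₀, ξ₀, hx₀, hξ₀, heq⟩
    · rw [h0]; positivity
    · simp only [habs x₀ hx₀.le] at heq
      have h1 := step1_point hv hconv hMA x₀ ξ₀ h m (by linarith) hξ₀ (by
        filter_upwards [hvc.continuousAt.eventually_lt continuousAt_const hx₀] with y hy η
        have := hm y hy.le η
        simpa only [habs y hy.le] using this) heq
      refine h1.trans ?_
      have := hnn x₀
      have h2 : (h - v x₀) ^ (k + 3) ≤ h ^ (k + 3) :=
        pow_le_pow_left₀ (by linarith) (by linarith) _
      exact mul_le_mul_of_nonneg_right h2 (by positivity)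
  have h1 := hm x hx ξ
  simp only [habs x hx] at h1
  exact h1.trans (mul_le_mul_of_nonneg_right hmle (dd2_nonneg hv hconv ξ x))

theorem step2_global {k : ℕ} {v : EuclideanSpace ℝ (Fin (k + 2)) → ℝ}
    (hv : ContDiff ℝ (⊤ : ℕ∞) v) (hconv : ConvexOn ℝ Set.univ v)
    (hMA : ∀ x, (hessianMatrix v x).det = 1) (z : EuclideanSpace ℝ (Fin (k + 2)))
    (hz : v z = 0) (hdz : ∀ a, dd a v z = 0) :
    ∃ C : ℝ, ∀ h : ℝ, 0 < h → ∀ ξ,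
      h ^ 2 * (dd ξ (dd ξ (dd ξ v)) z) ^ 2 ≤ C * h * dd ξ (dd ξ v) z ^ 3 := by
  obtain ⟨hnn, hK⟩ := sublevel_compact hv hconv hMA z hz hdz
  have hvc : Continuous v := hv.continuous
  have hv3 := dd_cont3 hv
  have hv2 := dd_cont2 hv
  set A : ℝ := 2 ^ (k + 3) * (((k:ℝ) + 2) ^ 2 + 3 * (k + 2)) with hA
  have hApos : 0 < A := by positivity
  have hcn := dd2_nonneg hv hconv
  have hgrad : ∀ h : ℝ, 0 < h → ∀ x, v x ≤ h → ∀ ξ,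
      (dd ξ v x) ^ 2 ≤ (A * h) * dd ξ (dd ξ v) x := by
    intro h hh x hx ξ
    have h1 := step1_global hv hconv hMA z hz hdz (2 * h) (by linarith) x ξ (by linarith)
    have h2 : h ^ (k + 2) ≤ (2 * h - v x) ^ (k + 2) :=
      pow_le_pow_left₀ hh.le (by linarith) _
    have h3 := (mul_le_mul_of_nonneg_right h2 (sq_nonneg (dd ξ v x))).trans h1
    refine le_of_mul_le_mul_left (h3.trans (le_of_eq ?_)) (show 0 < h ^ (k + 2) by positivity)
    rw [hA]; ring
  refine ⟨8 * A + 4 * (k + 2), fun h hh ξ => ?_⟩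
  obtain ⟨m, hm0, hm, hor⟩ := max_lemma v h (hK h) z (by simp [hz, hh.le])
    (fun x ξ => (h - v x) ^ 2 * (dd ξ (dd ξ (dd ξ v)) x) ^ 2) (fun x ξ => dd ξ (dd ξ v) x ^ 3)
    (by fun_prop) (by fun_prop) (fun x ξ h0 => pow_pos (dd2_pos hv hconv hMA x h0) 3)
    (fun x ξ => by positivity)
    (fun x ξ he => by simp [he]) 6 (by norm_num)
    (fun r x ξ => by simp only [dd3_smul hv]; ring)
    (fun r x ξ => by simp only [dd2_smul hv]; ring)
  have hmle : m ≤ (8 * A + 4 * (k + 2)) * h := by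
    rcases hor with h0 | ⟨x₀, ξ₀, hx₀, hξ₀, heq⟩
    · rw [h0]; positivity
    · have h1 := step2_point hv hconv hMA x₀ ξ₀ h m (A * h) (by linarith) hξ₀ (by positivity)
        (hgrad h hh x₀ hx₀.le) (by
        filter_upwards [hvc.continuousAt.eventually_lt continuousAt_const hx₀] with y hy η
        exact hm y hy.le η) heq
      have h2 : 4 * ((k:ℝ) + 2) * (h - v x₀) ≤ 4 * (k + 2) * h :=
        mul_le_mul_of_nonneg_left (by linarith [hnn x₀]) (by positivity)
      linarith
  have h1 := hm z (by simp [hz, hh.le]) ξ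
  simp only [hz, sub_zero] at h1
  exact h1.trans (mul_le_mul_of_nonneg_right hmle (pow_nonneg (hcn ξ z) 3))

theorem third_zero_base {k : ℕ} {v : EuclideanSpace ℝ (Fin (k + 2)) → ℝ}
    (hv : ContDiff ℝ (⊤ : ℕ∞) v) (hconv : ConvexOn ℝ Set.univ v)
    (hMA : ∀ x, (hessianMatrix v x).det = 1) (z : EuclideanSpace ℝ (Fin (k + 2)))
    (hz : v z = 0) (hdz : ∀ a, dd a v z = 0) (ξ : EuclideanSpace ℝ (Fin (k + 2))) :
    dd ξ (dd ξ (dd ξ v)) z = 0 := by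
  obtain ⟨C, hC⟩ := step2_global hv hconv hMA z hz hdz
  by_contra h0
  have hT : 0 < (dd ξ (dd ξ (dd ξ v)) z) ^ 2 := by positivity
  set T := (dd ξ (dd ξ (dd ξ v)) z) ^ 2
  set Q := dd ξ (dd ξ v) z ^ 3
  have hh : 0 < (|C * Q| + 1) / T := by positivity
  have h1 := hC _ hh ξ
  have h2 : (|C * Q| + 1) / T * (((|C * Q| + 1) / T) * T) ≤ (|C * Q| + 1) / T * (C * Q) := by
    nlinarith [h1]
  have h3 := le_of_mul_le_mul_left h2 hh
  rw [div_mul_cancel₀ _ hT.ne'] at h3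
  linarith [le_abs_self (C * Q)]

theorem third_zero {k : ℕ} {u : EuclideanSpace ℝ (Fin (k + 2)) → ℝ}
    (hu : ContDiff ℝ (⊤ : ℕ∞) u) (hconv : ConvexOn ℝ Set.univ u)
    (hMA : ∀ x, (hessianMatrix u x).det = 1) (z ξ : EuclideanSpace ℝ (Fin (k + 2))) :
    dd ξ (dd ξ (dd ξ u)) z = 0 := by
  set ℓ := fderiv ℝ u z with hℓ
  set v : EuclideanSpace ℝ (Fin (k + 2)) → ℝ := fun x => u x + (-(ℓ x) + (ℓ z - u z)) with hvdef
  have hud : Differentiable ℝ u := smooth_diff hu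
  have hv1 : ∀ a, dd a v = fun x => dd a u x - ℓ a := by
    intro a
    funext x
    have h1 : HasFDerivAt v (fderiv ℝ u x + -ℓ) x :=
      (hud x).hasFDerivAt.add (ℓ.hasFDerivAt.neg.add_const _)
    simp only [dd, h1.fderiv]
    simp [sub_eq_add_neg]
  have hv2 : ∀ a b, dd b (dd a v) = dd b (dd a u) := by
    intro a b
    funext x
    rw [hv1]
    simp only [dd, fderiv_sub_const]
    rfl
  have hvs : ContDiff ℝ (⊤ : ℕ∞) v := by
    have := ℓ.contDiff (n := ((⊤ : ℕ∞) : WithTop ℕ∞))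
    exact hu.add (this.neg.add contDiff_const)
  have hvc : ConvexOn ℝ Set.univ v := by
    refine hconv.add ?_
    refine ⟨convex_univ, fun x _ y _ a b _ _ hab => le_of_eq ?_⟩
    simp only [map_add, map_smul, smul_eq_mul]
    linear_combination (-(ℓ z - u z)) * hab
  have hvM : ∀ x, (hessianMatrix v x).det = 1 := by
    intro x
    have : hessianMatrix v x = hessianMatrix u x := by
      ext i j
      exact congrFun (hv2 (EuclideanSpace.single j 1) (EuclideanSpace.single i 1)) x
    rw [this, hMA]
  have := third_zero_base hvs hvc hvM z (by simp only [hvdef]; ring) (fun a => by rw [hv1]; simp [dd, hℓ]) ξ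
  rwa [hv2] at this

theorem taylor_two {n : ℕ} {u : EuclideanSpace ℝ (Fin n) → ℝ}
    (hu : ContDiff ℝ (⊤ : ℕ∞) u) (h3 : ∀ z ξ, dd ξ (dd ξ (dd ξ u)) z = 0)
    (x : EuclideanSpace ℝ (Fin n)) :
    u x = u 0 + dd x u 0 + 1 / 2 * dd x (dd x u) 0 := by
  have l0 := hasDerivAt_line hu 0 x
  have l1 := hasDerivAt_line (dd_smooth hu x) 0 x
  have l2 := hasDerivAt_line (dd_smooth (dd_smooth hu x) x) 0 x
  have c2 : ∀ t : ℝ, dd x (dd x u) (0 + t • x) = dd x (dd x u) 0 := by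
    intro t
    have := is_const_of_deriv_eq_zero (fun t => (l2 t).differentiableAt)
      (fun t => by rw [(l2 t).deriv, h3]) t 0
    simpa using this
  have c1 : ∀ t : ℝ, dd x u (0 + t • x) - t * dd x (dd x u) 0 = dd x u 0 := by
    intro t
    have hd : ∀ t, HasDerivAt (fun t : ℝ => dd x u (0 + t • x) - t * dd x (dd x u) 0) 0 t := by
      intro t
      have := (l1 t).sub ((hasDerivAt_id t).mul_const (dd x (dd x u) 0))
      rw [c2] at this
      exact this.congr_deriv (by ring)
    have := is_const_of_deriv_eq_zero (fun t => (hd t).differentiableAt)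
      (fun t => (hd t).deriv) t 0
    simpa using this
  have hd : ∀ t, HasDerivAt (fun t : ℝ => u (0 + t • x) -
      (t * dd x u 0 + t ^ 2 * (1 / 2 * dd x (dd x u) 0))) 0 t := by
    intro t
    have := (l0 t).sub (((hasDerivAt_id t).mul_const (dd x u 0)).add
      ((hasDerivAt_pow 2 t).mul_const (1 / 2 * dd x (dd x u) 0)))
    refine this.congr_deriv ?_
    have := c1 t
    simp only [zero_add] at this ⊢
    norm_num
    linarith
  have := is_const_of_deriv_eq_zero (fun t => (hd t).differentiableAt)
    (fun t => (hd t).deriv) 1 0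
  simp at this
  linarith

end Final

/-- Jörgens–Calabi–Pogorelov theorem: entire smooth convex solutions of
`det D²u = 1` on ℝⁿ are quadratic polynomials. -/
theorem jorgens_calabi_pogorelov (n : ℕ) (hn : 2 ≤ n)
    (u : EuclideanSpace ℝ (Fin n) → ℝ)
    (hu : ContDiff ℝ (⊤ : ℕ∞) u)
    (hconv : ConvexOn ℝ Set.univ u)
    (hMA : ∀ x, (hessianMatrix u x).det = 1) :
    IsQuadraticPoly u := by
  obtain ⟨k, rfl⟩ : ∃ k, n = k + 2 := ⟨n - 2, by omega⟩
  refine ⟨hessianMatrix u 0, fun i => dd (EuclideanSpace.single i (1:ℝ)) u 0, u 0, ?_, ?_⟩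
  · ext i j
    exact hess_symm hu 0 j i
  · intro x
    rw [taylor_two hu (third_zero hu hconv hMA) x, dd2_coord hu, dd_coord u x 0]
    have e1 : ∑ i, ∑ j, x i * hessianMatrix u 0 i j * x j =
        ∑ i, ∑ j, hessianMatrix u 0 i j * x i * x j :=
      Finset.sum_congr rfl fun i _ => Finset.sum_congr rfl fun j _ => by ring
    have e2 : ∑ i, x i * dd (EuclideanSpace.single i (1:ℝ)) u 0 =
        ∑ i, dd (EuclideanSpace.single i (1:ℝ)) u 0 * x i :=
      Finset.sum_congr rfl fun i _ => by ring
    rw [e1, e2]; ring
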